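/- arXiv:1509.04456 — 2 statements merged into one kernel-verified Lean document; each statement's English description precedes it below -/
import Mathlib

section
/- Let m ≥ 2 be an integer, let p and s be real numbers with p > m and s ≥ p/(p−m), and let n be a positive integer. Then for every continuous m-linear form T : ℓ_p^n × ⋯ × ℓ_p^n → 𝕂 one has (∑_{j=1}^n |T(e_j, …, e_j)|^s)^{1/s} ≤ ‖T‖. -/
/-!
The form `T` is first replaced by its diagonal part `∑ j, x⁰_j ⋯ xᵐ_j T(e_j, …, e_j)`, which has
norm at most `‖T‖` (`norm_diagonal_le`). This follows by averaging over independent sign vectors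
`ε¹, …, εᵐ ∈ {±1}ⁿ`, in the `m + 1` slots numbered from `0`: slot `k ≥ 1` is multiplied by `εᵏ`
and slot `0` by the product of all of them, so that the average of the coefficient of
`T(e_{r 0}, …, e_{r m})` is `∏ k, 𝔼 [εᵏ_{r 0} εᵏ_{r k}]`, which is `1` if `r` is constant
and `0` otherwise. Such sign changes are isometries of `ℓ_p^n`.

With `a_j = |T(e_j, …, e_j)|`, `t = p / (p - m)` and `S = ∑ j, a_j ^ t`, evaluating the diagonal
part (`m` slots) at `x_j = a_j ^ (1 / (p - m))`, with the phases put in one slot, gives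
`S ≤ ‖T‖ S ^ (m / p)`, hence `S ≤ ‖T‖ ^ t`. The case of an exponent `s ≥ t` follows from
`a_j ^ s ≤ ‖T‖ ^ (s - t) a_j ^ t`.
-/

/-- Orthogonality of the coordinates of a uniformly distributed sign vector. -/
lemma sum_signs_mul {𝕂 : Type*} [RCLike 𝕂] {n : ℕ} (a b : Fin n) :
    ∑ η : Fin n → ℤˣ, (((η a : ℤˣ) : ℤ) : 𝕂) * (((η b : ℤˣ) : ℤ) : 𝕂)
      = if a = b then (Fintype.card (Fin n → ℤˣ) : 𝕂) else 0 := by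
  split_ifs with h
  · subst h
    have : ∀ η : Fin n → ℤˣ, (((η a : ℤˣ) : ℤ) : 𝕂) * (((η a : ℤˣ) : ℤ) : 𝕂) = 1 := by
      intro η
      rcases Int.units_eq_one_or (η a) with h | h <;> simp [h]
    simp [this]
  · -- flipping the sign at `a` is a bijection that negates every summand
    have key : ∑ η : Fin n → ℤˣ, (((η a : ℤˣ) : ℤ) : 𝕂) * (((η b : ℤˣ) : ℤ) : 𝕂)
        = ∑ η : Fin n → ℤˣ, -((((η a : ℤˣ) : ℤ) : 𝕂) * (((η b : ℤˣ) : ℤ) : 𝕂)) := by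
      refine Fintype.sum_equiv (Equiv.mulLeft (Pi.mulSingle a (-1 : ℤˣ))) _ _ ?_
      intro η
      have hb : (Pi.mulSingle a (-1 : ℤˣ) : Fin n → ℤˣ) b = 1 :=
        Pi.mulSingle_eq_of_ne (Ne.symm h) _
      simp [hb]
    rw [Finset.sum_neg_distrib] at key
    exact self_eq_neg.mp key

/-- The sign put on coordinate `j` of slot `k`: slot `k ≥ 1` carries its own sign vector, slot `0`
carries the product of all of them. -/
def slotSign {m n : ℕ} (ε : Fin m → Fin n → ℤˣ) (k : Fin (m + 1)) (j : Fin n) : ℤˣ :=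
  Fin.cases (∏ i, ε i j) (fun i => ε i j) k

/-- Averaging the product of the slot signs over all choices keeps only the constant
multi-indices. -/
lemma sum_prod_slotSign {𝕂 : Type*} [RCLike 𝕂] {m n : ℕ} (r : Fin (m + 1) → Fin n) :
    ∑ ε : Fin m → Fin n → ℤˣ, ∏ k, (((slotSign ε k (r k) : ℤˣ) : ℤ) : 𝕂)
      = if ∀ i : Fin m, r 0 = r i.succ then (Fintype.card (Fin n → ℤˣ) : 𝕂) ^ m else 0 := by
  have h1 : ∀ ε : Fin m → Fin n → ℤˣ, ∏ k, (((slotSign ε k (r k) : ℤˣ) : ℤ) : 𝕂)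
      = ∏ i, ((((ε i (r 0) : ℤˣ) : ℤ) : 𝕂) * (((ε i (r i.succ) : ℤˣ) : ℤ) : 𝕂)) := by
    intro ε
    rw [Fin.prod_univ_succ, Finset.prod_mul_distrib]
    simp [slotSign, Units.coe_prod]
  simp_rw [h1]
  rw [← Fintype.prod_sum
    (fun (i : Fin m) (η : Fin n → ℤˣ) =>
      (((η (r 0) : ℤˣ) : ℤ) : 𝕂) * (((η (r i.succ) : ℤˣ) : ℤ) : 𝕂))]
  simp_rw [sum_signs_mul]
  rw [Finset.prod_ite_zero]
  simp

lemma norm_toLp_sign_mul {𝕂 : Type*} [RCLike 𝕂] {n : ℕ} {q : ENNReal} (hq : 0 < q.toReal)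
    [Fact (1 ≤ q)] (η : Fin n → ℤˣ) (f : Fin n → 𝕂) :
    ‖WithLp.toLp q (fun j => (((η j : ℤˣ) : ℤ) : 𝕂) * f j)‖ = ‖WithLp.toLp q f‖ := by
  rw [PiLp.norm_eq_sum hq, PiLp.norm_eq_sum hq]
  congr 1
  refine Finset.sum_congr rfl fun j _ => ?_
  rcases Int.units_eq_one_or (η j) with h | h <;> simp [h]

/-- The diagonal part of a multilinear form on `ℓ_p^n` has norm at most that of the form. -/
lemma norm_diagonal_le {𝕂 : Type*} [RCLike 𝕂] {m n : ℕ} {q : ENNReal} (hq : 0 < q.toReal)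
    [Fact (1 ≤ q)]
    (T : ContinuousMultilinearMap 𝕂 (fun _ : Fin (m + 1) => PiLp q (fun _ : Fin n => 𝕂)) 𝕂)
    (f : Fin (m + 1) → Fin n → 𝕂) :
    ‖∑ j, (∏ k, f k j) * T (fun _ => WithLp.toLp q (Pi.single j 1))‖
      ≤ ‖T‖ * ∏ k, ‖WithLp.toLp q (f k)‖ := by
  set N : ℕ := Fintype.card (Fin n → ℤˣ) with hN
  have hNpos : 0 < N := Fintype.card_pos
  have expand : ∀ g : Fin (m + 1) → Fin n → 𝕂, T (fun k => WithLp.toLp q (g k))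
      = ∑ r : Fin (m + 1) → Fin n,
        (∏ k, g k (r k)) * T (fun k => WithLp.toLp q (Pi.single (r k) 1)) := by
    intro g
    have h1 : (fun k => WithLp.toLp q (g k))
        = fun k => ∑ j, g k j • (WithLp.toLp q (Pi.single j (1 : 𝕂)) : PiLp q _) := by
      funext k
      ext i
      simp [Pi.single_apply]
    rw [h1, T.map_sum]
    refine Finset.sum_congr rfl fun r _ => ?_
    rw [T.map_smul_univ (fun k => g k (r k)), smul_eq_mul]
  have avg : ∑ ε : Fin m → Fin n → ℤˣ,
        T (fun k => WithLp.toLp q (fun j => (((slotSign ε k j : ℤˣ) : ℤ) : 𝕂) * f k j))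
      = (N : 𝕂) ^ m * ∑ j, (∏ k, f k j) * T (fun _ => WithLp.toLp q (Pi.single j 1)) := by
    rw [Finset.sum_congr rfl fun ε _ =>
      expand (fun k j => (((slotSign ε k j : ℤˣ) : ℤ) : 𝕂) * f k j)]
    simp_rw [Finset.prod_mul_distrib]
    rw [Finset.sum_comm]
    simp_rw [mul_assoc, ← Finset.sum_mul, sum_prod_slotSign, ite_mul, zero_mul]
    rw [← Finset.sum_filter, Finset.mul_sum]
    symm
    refine Finset.sum_nbij' (fun j _ => j) (fun r => r 0) ?_ ?_ ?_ ?_ ?_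
    · intro j _; simp
    · intro r _; simp
    · intro j _; rfl
    · intro r hr
      simp only [Finset.mem_filter, Finset.mem_univ, true_and] at hr
      funext k
      exact Fin.cases rfl (fun i => hr i) k
    · intro j _; rfl
  have bound : ‖∑ ε : Fin m → Fin n → ℤˣ,
        T (fun k => WithLp.toLp q (fun j => (((slotSign ε k j : ℤˣ) : ℤ) : 𝕂) * f k j))‖
      ≤ (N : ℝ) ^ m * (‖T‖ * ∏ k, ‖WithLp.toLp q (f k)‖) := by
    refine (norm_sum_le _ _).trans ?_
    refine (Finset.sum_le_card_nsmul _ _ (‖T‖ * ∏ k, ‖WithLp.toLp q (f k)‖) ?_).trans ?_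
    · intro ε _
      refine (T.le_opNorm _).trans (le_of_eq ?_)
      congr 1
      exact Finset.prod_congr rfl fun k _ => norm_toLp_sign_mul hq (slotSign ε k) (f k)
    · rw [nsmul_eq_mul, Finset.card_univ, Fintype.card_fun (α := Fin m), ← hN]
      simp
  rw [avg, norm_mul, norm_pow, RCLike.norm_natCast] at bound
  exact le_of_mul_le_mul_left bound (by positivity)

/-- For `m ≥ 2`, `p > m`, `s ≥ p/(p−m)` and every continuous `m`-linear form
`T : ℓ_p^n × ⋯ × ℓ_p^n → 𝕂`, `(∑_{j=1}^n |T(e_j,…,e_j)|^s)^{1/s} ≤ ‖T‖`. -/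
theorem stmt_7 {𝕂 : Type*} [RCLike 𝕂] (m : ℕ) (hm : 2 ≤ m) (p s : ℝ)
    (hp : (m : ℝ) < p) (hs : p / (p - (m : ℝ)) ≤ s) [Fact (1 ≤ ENNReal.ofReal p)]
    (n : ℕ) (hn : 0 < n)
    (T : ContinuousMultilinearMap 𝕂
      (fun _ : Fin m => PiLp (ENNReal.ofReal p) (fun _ : Fin n => 𝕂)) 𝕂) :
    (∑ j : Fin n,
        ‖T (fun _ => (WithLp.equiv (ENNReal.ofReal p) (Fin n → 𝕂)).symm (Pi.single j 1))‖ ^ s)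
        ^ (1 / s)
      ≤ ‖T‖ := by
  change (∑ j : Fin n,
        ‖T (fun _ => WithLp.toLp (ENNReal.ofReal p) (Pi.single j 1))‖ ^ s) ^ (1 / s) ≤ ‖T‖
  have hm0 : (0 : ℝ) ≤ m := Nat.cast_nonneg m
  have hp0 : 0 < p := hm0.trans_lt hp
  have hd : 0 < p - m := sub_pos.mpr hp
  have hpr : (ENNReal.ofReal p).toReal = p := ENNReal.toReal_ofReal hp0.le
  set t : ℝ := p / (p - m) with ht
  have ht0 : 0 < t := div_pos hp0 hd
  have hs0 : 0 < s := ht0.trans_le hs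
  obtain ⟨m, rfl⟩ : ∃ m', m = m' + 1 := ⟨m - 1, by omega⟩
  set a : Fin n → ℝ := fun j => ‖T (fun _ => WithLp.toLp (ENNReal.ofReal p) (Pi.single j 1))‖
    with ha
  have ha0 : ∀ j, 0 ≤ a j := fun j => norm_nonneg _
  set S : ℝ := ∑ j, a j ^ t with hS
  have hS0 : 0 ≤ S := Finset.sum_nonneg fun j _ => Real.rpow_nonneg (ha0 j) _
  choose c hc1 hc2 using fun j =>
    RCLike.exists_norm_eq_mul_self (T (fun _ => WithLp.toLp (ENNReal.ofReal p) (Pi.single j 1)))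
  let x : Fin n → ℝ := fun j => a j ^ (1 / (p - (m + 1 : ℕ)))
  have hx0 : ∀ j, 0 ≤ x j := fun j => Real.rpow_nonneg (ha0 j) _
  have hxp : ∀ j, x j ^ p = a j ^ t := by
    intro j
    simp only [x]
    rw [← Real.rpow_mul (ha0 j), ht]
    congr 1
    ring
  have hxm : ∀ j, x j ^ (m + 1) * a j = a j ^ t := by
    intro j
    have h1 : x j ^ (m + 1) = a j ^ (((m + 1 : ℕ) : ℝ) / (p - (m + 1 : ℕ))) := by
      simp only [x]
      rw [← Real.rpow_mul_natCast (ha0 j)]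
      congr 1
      ring
    rw [h1]
    nth_rewrite 2 [← Real.rpow_one (a j)]
    rw [← Real.rpow_add_of_nonneg (ha0 j) (div_nonneg hm0 hd.le) zero_le_one]
    congr 1
    rw [ht]
    field_simp
    ring
  -- the phases `c j` go into slot `0`
  let f : Fin (m + 1) → Fin n → 𝕂 := fun k j => (Fin.cases (c j) (fun _ => 1) k : 𝕂) * (x j : 𝕂)
  have hfn : ∀ k j, ‖f k j‖ = x j := by
    intro k j
    refine Fin.cases ?_ (fun i => ?_) k
    · simp [f, hc1, abs_of_nonneg (hx0 j)]
    · simp [f, abs_of_nonneg (hx0 j)]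
  have hnorm : ∀ k, ‖WithLp.toLp (ENNReal.ofReal p) (f k)‖ = S ^ (1 / p) := by
    intro k
    rw [PiLp.norm_eq_sum (by rw [hpr]; exact hp0), hpr, hS]
    congr 1
    refine Finset.sum_congr rfl fun j _ => ?_
    rw [← hxp j, ← hfn k j]
  have hsum : ∑ j, (∏ k, f k j) * T (fun _ => WithLp.toLp (ENNReal.ofReal p) (Pi.single j 1))
      = ((S : ℝ) : 𝕂) := by
    rw [hS, RCLike.ofReal_sum]
    refine Finset.sum_congr rfl fun j _ => ?_
    rw [← hxm j]
    have h1 : ∏ k, f k j = c j * (x j : 𝕂) ^ (m + 1) := by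
      simp only [f]
      rw [Finset.prod_mul_distrib, Finset.prod_const, Finset.card_univ, Fintype.card_fin,
        Fin.prod_univ_succ]
      simp
    rw [h1, RCLike.ofReal_mul, RCLike.ofReal_pow, hc2 j]
    ring
  have main := norm_diagonal_le (by rw [hpr]; exact hp0) T f
  rw [hsum] at main
  simp_rw [hnorm] at main
  rw [RCLike.norm_ofReal, abs_of_nonneg hS0, Finset.prod_const, Finset.card_univ,
    Fintype.card_fin, ← Real.rpow_mul_natCast hS0] at main
  have hT0 : 0 ≤ ‖T‖ := norm_nonneg _
  have hSt : S ≤ ‖T‖ ^ t := by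
    rcases hS0.eq_or_lt with h | h
    · rw [← h]; exact Real.rpow_nonneg hT0 _
    · have hroot : S ^ (1 / t) ≤ ‖T‖ := by
        have hsplit : S = S ^ (1 / t) * S ^ (1 / p * ((m + 1 : ℕ) : ℝ)) := by
          rw [← Real.rpow_add h, ht]
          have : 1 / (p / (p - ((m + 1 : ℕ) : ℝ))) + 1 / p * ((m + 1 : ℕ) : ℝ) = 1 := by
            field_simp
            ring
          rw [this, Real.rpow_one]
        refine le_of_mul_le_mul_right ?_ (Real.rpow_pos_of_pos h (1 / p * ((m + 1 : ℕ) : ℝ)))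
        rw [← hsplit]
        exact main
      calc S = (S ^ (1 / t)) ^ t := by
            rw [← Real.rpow_mul hS0, one_div_mul_cancel ht0.ne', Real.rpow_one]
        _ ≤ ‖T‖ ^ t := Real.rpow_le_rpow (Real.rpow_nonneg hS0 _) hroot ht0.le
  have haT : ∀ j, a j ≤ ‖T‖ := by
    intro j
    have h1 : a j ^ t ≤ S :=
      Finset.single_le_sum (f := fun j => a j ^ t)
        (fun j _ => Real.rpow_nonneg (ha0 j) _) (Finset.mem_univ j)
    exact (Real.rpow_le_rpow_iff (ha0 j) hT0 ht0).mp (h1.trans hSt)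
  have hst : 0 ≤ s - t := sub_nonneg.mpr hs
  have hfin : ∑ j, a j ^ s ≤ ‖T‖ ^ s := by
    calc ∑ j, a j ^ s ≤ ∑ j, ‖T‖ ^ (s - t) * a j ^ t := by
          refine Finset.sum_le_sum fun j _ => ?_
          have : a j ^ s = a j ^ (s - t) * a j ^ t := by
            rw [← Real.rpow_add_of_nonneg (ha0 j) hst ht0.le, sub_add_cancel]
          rw [this]
          exact mul_le_mul_of_nonneg_right (Real.rpow_le_rpow (ha0 j) (haT j) hst)
            (Real.rpow_nonneg (ha0 j) _)
      _ = ‖T‖ ^ (s - t) * S := by rw [hS, Finset.mul_sum]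
      _ ≤ ‖T‖ ^ (s - t) * ‖T‖ ^ t :=
          mul_le_mul_of_nonneg_left hSt (Real.rpow_nonneg hT0 _)
      _ = ‖T‖ ^ s := by
          rw [← Real.rpow_add_of_nonneg hT0 hst ht0.le, sub_add_cancel]
  calc (∑ j, a j ^ s) ^ (1 / s) ≤ (‖T‖ ^ s) ^ (1 / s) :=
        Real.rpow_le_rpow (Finset.sum_nonneg fun j _ => Real.rpow_nonneg (ha0 j) _) hfin
          (by positivity)
    _ = ‖T‖ := by rw [← Real.rpow_mul hT0, mul_one_div_cancel hs0.ne', Real.rpow_one]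
end

section
/- Let m and n be positive integers, let p_1, …, p_m ≥ 1 be real numbers with 1/p_1 + ⋯ + 1/p_m ≥ 1, and let s > 0 be a real number. Then there exists a nonzero continuous m-linear form A : ℓ_{p_1}^n × ⋯ × ℓ_{p_m}^n → 𝕂 with (∑_{j=1}^n |A(e_j, …, e_j)|^s)^{1/s} = n^{1/s} · ‖A‖. Consequently, the constant n^{1/s} in the estimate (∑_{j=1}^n |A(e_j, …, e_j)|^s)^{1/s} ≤ n^{1/s} · ‖A‖ is best possible when 1/p_1 + ⋯ + 1/p_m ≥ 1. -/
/-!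
The extremal form is the diagonal form `A(x₁, …, x_m) = ∑ j, x₁(j) ⋯ x_m(j)`. It takes the value
`1` at every `(e_j, …, e_j)`, so the left-hand side is `n ^ (1 / s)`, and it remains to see that
`‖A‖ = 1`. The bound `1 ≤ ‖A‖` comes from evaluating at unit vectors. The bound `‖A‖ ≤ 1` is a
Hölder inequality for exponents with `S = ∑ 1 / p_i ≥ 1` (`sum_prod_le_one`): on the unit balls all
coordinates are at most `1` in modulus, so the exponents `1 / p_i` may be lowered to the weights
`1 / (p_i S)`, which add up to `1`, and weighted AM-GM applies. Homogeneity does the rest.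
-/

/-- The diagonal `m`-linear form `(x₁, …, x_m) ↦ ∑ j, x₁(j) ⋯ x_m(j)`. -/
noncomputable def diagForm (𝕂 : Type*) [RCLike 𝕂] (m n : ℕ) (p : Fin m → ENNReal)
    [∀ i, Fact (1 ≤ p i)] :
    ContinuousMultilinearMap 𝕂 (fun i : Fin m => PiLp (p i) (fun _ : Fin n => 𝕂)) 𝕂 :=
  ∑ j : Fin n, (ContinuousMultilinearMap.mkPiAlgebra 𝕂 (Fin m) 𝕂).compContinuousLinearMap
    (fun i => PiLp.proj (p i) (fun _ : Fin n => 𝕂) j)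

lemma diagForm_apply {𝕂 : Type*} [RCLike 𝕂] {m n : ℕ} {p : Fin m → ENNReal}
    [∀ i, Fact (1 ≤ p i)] (x : ∀ i, PiLp (p i) (fun _ : Fin n => 𝕂)) :
    diagForm 𝕂 m n p x = ∑ j, ∏ i, x i j := by
  simp [diagForm]

/-- Hölder's inequality on the unit balls for exponents whose reciprocals add up to at least
`1`. -/
lemma sum_prod_le_one {m n : ℕ} (p : Fin m → ℝ) (hp : ∀ i, 1 ≤ p i)
    (hsum : 1 ≤ ∑ i, 1 / p i) (a : Fin m → Fin n → ℝ) (ha : ∀ i j, 0 ≤ a i j)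
    (hle : ∀ i, ∑ j, a i j ^ p i ≤ 1) : ∑ j, ∏ i, a i j ≤ 1 := by
  set S := ∑ i, 1 / p i with hS
  have hS0 : 0 < S := by linarith
  have hp0 : ∀ i, 0 < p i := fun i => by linarith [hp i]
  have hw0 : ∀ i, 0 ≤ 1 / p i / S := fun i => by have := hp0 i; positivity
  have hw1 : ∑ i, 1 / p i / S = 1 := by
    rw [← Finset.sum_div, ← hS, div_self hS0.ne']
  have hpow : ∀ i j, a i j ^ p i ≤ 1 := fun i j =>
    (Finset.single_le_sum (f := fun j => a i j ^ p i)
      (fun k _ => Real.rpow_nonneg (ha i k) _) (Finset.mem_univ j)).trans (hle i)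
  have key : ∀ i j, a i j ≤ (a i j ^ p i) ^ (1 / p i / S) := by
    intro i j
    have h1 : a i j = (a i j ^ p i) ^ (1 / p i) := by
      rw [← Real.rpow_mul (ha i j), mul_one_div_cancel (hp0 i).ne', Real.rpow_one]
    have hpi : 0 ≤ 1 / p i := (one_div_pos.2 (hp0 i)).le
    calc a i j = (a i j ^ p i) ^ (1 / p i) := h1
      _ ≤ _ := Real.rpow_le_rpow_of_exponent_ge_of_imp (Real.rpow_nonneg (ha i j) _) (hpow i j)
        (div_le_self hpi hsum) (fun _ h =>
          absurd h (one_div_pos.2 (hp0 i)).ne')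
  calc ∑ j, ∏ i, a i j
      ≤ ∑ j, ∑ i, 1 / p i / S * a i j ^ p i := by
        refine Finset.sum_le_sum fun j _ => ?_
        refine (Finset.prod_le_prod (fun i _ => ha i j) (fun i _ => key i j)).trans ?_
        exact Real.geom_mean_le_arith_mean_weighted _ _ _ (fun i _ => hw0 i) hw1
          (fun i _ => Real.rpow_nonneg (ha i j) _)
    _ = ∑ i, 1 / p i / S * ∑ j, a i j ^ p i := by
        rw [Finset.sum_comm]
        simp_rw [Finset.mul_sum]
    _ ≤ ∑ i, 1 / p i / S :=
        Finset.sum_le_sum fun i _ => mul_le_of_le_one_right (hw0 i) (hle i)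
    _ = 1 := hw1

lemma norm_diagForm_le_one {𝕂 : Type*} [RCLike 𝕂] {m n : ℕ} (p : Fin m → ℝ)
    (hp : ∀ i, 1 ≤ p i) [∀ i, Fact (1 ≤ ENNReal.ofReal (p i))] (hsum : 1 ≤ ∑ i, 1 / p i) :
    ‖diagForm 𝕂 m n (fun i => ENNReal.ofReal (p i))‖ ≤ 1 := by
  have hp0 : ∀ i, 0 < p i := fun i => by linarith [hp i]
  have unit : ∀ x : ∀ i, PiLp (ENNReal.ofReal (p i)) (fun _ : Fin n => 𝕂),
      (∀ i, ‖x i‖ = 1) → ‖diagForm 𝕂 m n (fun i => ENNReal.ofReal (p i)) x‖ ≤ 1 := by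
    intro x hx
    rw [diagForm_apply]
    refine (norm_sum_le _ _).trans ?_
    simp_rw [norm_prod]
    refine sum_prod_le_one p hp hsum (fun i j => ‖x i j‖) (fun _ _ => norm_nonneg _) fun i => ?_
    have h := hx i
    have htr : (ENNReal.ofReal (p i)).toReal = p i := ENNReal.toReal_ofReal (hp0 i).le
    rw [PiLp.norm_eq_sum (by rw [htr]; exact hp0 i), htr] at h
    have hnn : 0 ≤ ∑ j, ‖x i j‖ ^ p i :=
      Finset.sum_nonneg fun j _ => Real.rpow_nonneg (norm_nonneg _) _
    calc ∑ j, ‖x i j‖ ^ p i = ((∑ j, ‖x i j‖ ^ p i) ^ (1 / p i)) ^ p i := by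
          rw [← Real.rpow_mul hnn, one_div_mul_cancel (hp0 i).ne', Real.rpow_one]
      _ = 1 := by rw [h, Real.one_rpow]
      _ ≤ 1 := le_rfl
  refine ContinuousMultilinearMap.opNorm_le_bound zero_le_one fun x => ?_
  rw [one_mul]
  by_cases h0 : ∃ i, x i = 0
  · obtain ⟨i, hi⟩ := h0
    rw [ContinuousMultilinearMap.map_coord_zero _ i hi, norm_zero]
    exact Finset.prod_nonneg fun i _ => norm_nonneg _
  · push Not at h0
    have h := unit (fun i => ((‖x i‖⁻¹ : ℝ) : 𝕂) • x i) fun i => by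
      rw [norm_smul, RCLike.norm_ofReal, abs_inv, abs_norm,
        inv_mul_cancel₀ (norm_ne_zero_iff.2 (h0 i))]
    rw [ContinuousMultilinearMap.map_smul_univ, norm_smul, norm_prod] at h
    simp_rw [RCLike.norm_ofReal, abs_inv, abs_norm] at h
    rw [Finset.prod_inv_distrib] at h
    have hpos : 0 < ∏ i, ‖x i‖ := Finset.prod_pos fun i _ => norm_pos_iff.2 (h0 i)
    rwa [inv_mul_le_iff₀ hpos, mul_one] at h

lemma diagForm_single {𝕂 : Type*} [RCLike 𝕂] {m n : ℕ} (hm : 0 < m) (p : Fin m → ENNReal)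
    [∀ i, Fact (1 ≤ p i)] (j : Fin n) :
    diagForm 𝕂 m n p (fun i => (WithLp.equiv (p i) (Fin n → 𝕂)).symm (Pi.single j 1)) = 1 := by
  rw [diagForm_apply, Finset.sum_eq_single j]
  · simp
  · intro k _ hk
    -- Off the diagonal the product vanishes because it has at least one factor.
    exact Finset.prod_eq_zero (Finset.mem_univ (⟨0, hm⟩ : Fin m)) (by simp [hk])
  · simp

/-- For positive integers `m, n`, reals `p_1,…,p_m ≥ 1` with
`1/p_1 + ⋯ + 1/p_m ≥ 1`, and `s > 0`, there exists a nonzero continuous `m`-linear form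
`A : ℓ_{p_1}^n × ⋯ × ℓ_{p_m}^n → 𝕂` with
`(∑_{j=1}^n |A(e_j,…,e_j)|^s)^{1/s} = n^{1/s} · ‖A‖`, so the constant `n^{1/s}` is
best possible. -/
theorem stmt_9 {𝕂 : Type*} [RCLike 𝕂] (m n : ℕ) (hm : 0 < m) (hn : 0 < n)
    (p : Fin m → ℝ) (hp : ∀ i, 1 ≤ p i) [∀ i, Fact (1 ≤ ENNReal.ofReal (p i))]
    (hsum : 1 ≤ ∑ i : Fin m, 1 / p i)
    (s : ℝ) (hs : 0 < s) :
    ∃ A : ContinuousMultilinearMap 𝕂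
        (fun i : Fin m => PiLp (ENNReal.ofReal (p i)) (fun _ : Fin n => 𝕂)) 𝕂,
      A ≠ 0 ∧
      (∑ j : Fin n,
          ‖A (fun i => (WithLp.equiv (ENNReal.ofReal (p i)) (Fin n → 𝕂)).symm (Pi.single j 1))‖ ^ s)
          ^ (1 / s)
        = (n : ℝ) ^ (1 / s) * ‖A‖ := by
  have hdiag := diagForm_single (𝕂 := 𝕂) (n := n) hm (fun i => ENNReal.ofReal (p i))
  have hnorm : ‖diagForm 𝕂 m n (fun i => ENNReal.ofReal (p i))‖ = 1 := by
    refine le_antisymm (norm_diagForm_le_one p hp hsum) ?_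
    have h := (diagForm 𝕂 m n (fun i => ENNReal.ofReal (p i))).le_opNorm
      (fun i => (WithLp.equiv (ENNReal.ofReal (p i)) (Fin n → 𝕂)).symm (Pi.single ⟨0, hn⟩ 1))
    rw [hdiag] at h
    simpa using h
  refine ⟨diagForm 𝕂 m n (fun i => ENNReal.ofReal (p i)), ?_, ?_⟩
  · rw [← norm_ne_zero_iff, hnorm]
    exact one_ne_zero
  · rw [hnorm]
    simp_rw [hdiag]
    simp
end
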